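/- arXiv:2509.18877 — 3 statements merged into one kernel-verified Lean document; each statement's English description precedes it below -/
import Mathlib

section
/- Let n ≥ p ≥ 1 and let U ∈ M_{n×p}(ℝ) satisfy UᵀU = I_p, with first p rows U₁ ∈ M_{p×p}(ℝ) and last n−p rows U₂ ∈ M_{(n−p)×p}(ℝ). If U₁ is invertible, then the matrix I_{n−p} − U₂U₂ᵀ is invertible and (I_{n−p} − U₂U₂ᵀ)^{−1} = I_{n−p} + U₂ (U₁ᵀ U₁)^{−1} U₂ᵀ = I_{n−p} + U₂ U₁^{−1} (U₁ᵀ)^{−1} U₂ᵀ. -/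
/-!
Splitting the rows of `U` turns `UᵀU = 1` into `U₁ᵀU₁ + U₂ᵀU₂ = 1`. With `G = U₁ᵀU₁`
invertible and `U₂ᵀU₂ = 1 - G`, expanding `(1 - U₂U₂ᵀ)(1 + U₂G⁻¹U₂ᵀ)` leaves
`1 + U₂(G⁻¹ - 1 - (1 - G)G⁻¹)U₂ᵀ = 1`, and a one-sided inverse of a square matrix is
two-sided. The second formula is `(U₁ᵀU₁)⁻¹ = U₁⁻¹(U₁ᵀ)⁻¹`.
-/

open Matrix

theorem one_sub_mul_transpose_mul_eq_one {m p : ℕ} (A : Matrix (Fin m) (Fin p) ℝ)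
    (G : Matrix (Fin p) (Fin p) ℝ) (hG : IsUnit G.det) (h : G + Aᵀ * A = 1) :
    (1 - A * Aᵀ) * (1 + A * G⁻¹ * Aᵀ) = 1 := by
  have hA : Aᵀ * A = 1 - G := eq_sub_of_add_eq' h
  have key : A * Aᵀ * (A * G⁻¹ * Aᵀ) = A * G⁻¹ * Aᵀ - A * Aᵀ := by
    calc A * Aᵀ * (A * G⁻¹ * Aᵀ) = A * ((Aᵀ * A) * G⁻¹) * Aᵀ := by
          simp only [Matrix.mul_assoc]
      _ = A * G⁻¹ * Aᵀ - A * Aᵀ := by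
          rw [hA, Matrix.sub_mul, Matrix.mul_nonsing_inv _ hG, Matrix.one_mul,
            Matrix.mul_sub, Matrix.sub_mul, Matrix.mul_one]
  rw [Matrix.sub_mul, Matrix.one_mul, Matrix.mul_add, Matrix.mul_one, key]
  abel

/-- **Woodbury-type inversion.**
For `n ≥ p ≥ 1` and `U` with `UᵀU = I_p`, with first `p` rows `U₁` invertible and last
`n − p` rows `U₂`, the matrix `I_{n−p} − U₂U₂ᵀ` is invertible and
`(I_{n−p} − U₂U₂ᵀ)⁻¹ = I_{n−p} + U₂ (U₁ᵀU₁)⁻¹ U₂ᵀ = I_{n−p} + U₂ U₁⁻¹ (U₁ᵀ)⁻¹ U₂ᵀ`. -/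
theorem stiefel_woodbury {n p : ℕ} (hp : 1 ≤ p) (hn : p ≤ n)
    (U : Matrix (Fin n) (Fin p) ℝ) (hU : Uᵀ * U = 1)
    (U₁ : Matrix (Fin p) (Fin p) ℝ) (hU₁ : ∀ i j, U₁ i j = U (Fin.castLE hn i) j)
    (U₂ : Matrix (Fin (n - p)) (Fin p) ℝ)
    (hU₂ : ∀ i j, U₂ i j = U ⟨p + (i : ℕ), by have := i.isLt; omega⟩ j)
    (hU₁inv : IsUnit U₁) :
    IsUnit (1 - U₂ * U₂ᵀ) ∧
      (1 - U₂ * U₂ᵀ)⁻¹ = 1 + U₂ * (U₁ᵀ * U₁)⁻¹ * U₂ᵀ ∧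
      (1 - U₂ * U₂ᵀ)⁻¹ = 1 + U₂ * U₁⁻¹ * (U₁ᵀ)⁻¹ * U₂ᵀ := by
  have hsum : U₁ᵀ * U₁ + U₂ᵀ * U₂ = 1 := by
    rw [← hU]
    ext i j
    simp only [Matrix.add_apply, Matrix.mul_apply, Matrix.transpose_apply, hU₁, hU₂]
    rw [← (finCongr (Nat.add_sub_of_le hn)).sum_comp (fun k => U k i * U k j),
      Fin.sum_univ_add]
    rfl
  have hdet : IsUnit U₁.det := (Matrix.isUnit_iff_isUnit_det _).1 hU₁inv
  have hG : IsUnit (U₁ᵀ * U₁).det := by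
    rw [Matrix.det_mul, Matrix.det_transpose]
    exact hdet.mul hdet
  have hmul := one_sub_mul_transpose_mul_eq_one U₂ _ hG hsum
  have hinv := Matrix.inv_eq_right_inv hmul
  refine ⟨IsUnit.of_mul_eq_one _ hmul, hinv, ?_⟩
  rw [hinv, Matrix.mul_inv_rev, ← Matrix.mul_assoc U₂]
end

section
/- Let n ≥ p ≥ 1 and let U ∈ M_{n×p}(ℝ) satisfy UᵀU = I_p, with first p rows U₁ ∈ M_{p×p}(ℝ) invertible and last n−p rows U₂ ∈ M_{(n−p)×p}(ℝ). Let Z₂ ∈ M_{(n−p)×n}(ℝ) be the last n−p rows of Z = I_n − UUᵀ. Then Z₂ᵀ (I_{n−p} + U₂ U₁^{−1} (U₁ᵀ)^{−1} U₂ᵀ) Z₂ = I_n − UUᵀ. -/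
/-!
`Z = 1 - U * Uᵀ` is the orthogonal projection onto the complement of the column space of `U`, so
`Uᵀ * Z = 0` and `Zᵀ * Z = Z`. Splitting the rows of `U` and `Z` into the first `p` and the last
`n - p`, the first identity reads `U₁ᵀ * Z₁ + U₂ᵀ * Z₂ = 0`, i.e. `(U₁ᵀ)⁻¹ * U₂ᵀ * Z₂ = -Z₁`. The
left-hand side is therefore `Z₂ᵀ * Z₂ + Z₁ᵀ * Z₁ = Zᵀ * Z = Z`.
-/

open Matrix

/-- Block multiplication: `Aᵀ * B` is the contribution of the first `p` rows plus that of the last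
`n - p` rows. -/
theorem transpose_mul_split_rows {n p a b : ℕ} (hn : p ≤ n)
    (hlt : ∀ i : Fin (n - p), p + (i : ℕ) < n)
    (A : Matrix (Fin n) (Fin a) ℝ) (B : Matrix (Fin n) (Fin b) ℝ)
    (A₁ : Matrix (Fin p) (Fin a) ℝ) (B₁ : Matrix (Fin p) (Fin b) ℝ)
    (A₂ : Matrix (Fin (n - p)) (Fin a) ℝ) (B₂ : Matrix (Fin (n - p)) (Fin b) ℝ)
    (hA₁ : ∀ i j, A₁ i j = A (Fin.castLE hn i) j)
    (hB₁ : ∀ i j, B₁ i j = B (Fin.castLE hn i) j)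
    (hA₂ : ∀ i j, A₂ i j = A ⟨p + (i : ℕ), hlt i⟩ j)
    (hB₂ : ∀ i j, B₂ i j = B ⟨p + (i : ℕ), hlt i⟩ j) :
    Aᵀ * B = A₁ᵀ * B₁ + A₂ᵀ * B₂ := by
  ext i j
  simp only [Matrix.add_apply, Matrix.mul_apply, Matrix.transpose_apply, hA₁, hB₁, hA₂, hB₂]
  have e : p + (n - p) = n := by omega
  rw [← (finCongr e).sum_comp, Fin.sum_univ_add]
  rfl

/-- **The key projection identity.**
For `n ≥ p ≥ 1` and `U` with `UᵀU = I_p`, first `p` rows `U₁` invertible, last `n − p`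
rows `U₂`, and `Z₂` the last `n − p` rows of `Z = I_n − UUᵀ`, one has
`Z₂ᵀ (I_{n−p} + U₂ U₁⁻¹ (U₁ᵀ)⁻¹ U₂ᵀ) Z₂ = I_n − UUᵀ`. -/
theorem stiefel_Z2_projection {n p : ℕ} (hp : 1 ≤ p) (hn : p ≤ n)
    (U : Matrix (Fin n) (Fin p) ℝ) (hU : Uᵀ * U = 1)
    (U₁ : Matrix (Fin p) (Fin p) ℝ) (hU₁ : ∀ i j, U₁ i j = U (Fin.castLE hn i) j)
    (U₂ : Matrix (Fin (n - p)) (Fin p) ℝ)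
    (hU₂ : ∀ i j, U₂ i j = U ⟨p + (i : ℕ), by have := i.isLt; omega⟩ j)
    (hU₁inv : IsUnit U₁)
    (Z₂ : Matrix (Fin (n - p)) (Fin n) ℝ)
    (hZ₂ : ∀ i j, Z₂ i j =
      (1 - U * Uᵀ : Matrix (Fin n) (Fin n) ℝ) ⟨p + (i : ℕ), by have := i.isLt; omega⟩ j) :
    Z₂ᵀ * (1 + U₂ * U₁⁻¹ * (U₁ᵀ)⁻¹ * U₂ᵀ) * Z₂ = 1 - U * Uᵀ := by
  set Z : Matrix (Fin n) (Fin n) ℝ := 1 - U * Uᵀ with hZ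
  have hZt : Zᵀ = Z := by simp [hZ]
  have hUZ : Uᵀ * Z = 0 := by
    rw [hZ, Matrix.mul_sub, ← Matrix.mul_assoc, hU]; simp
  have hZZ : Zᵀ * Z = Z := by
    rw [hZt]
    nth_rewrite 1 [hZ]
    rw [Matrix.sub_mul, Matrix.mul_assoc, hUZ]; simp
  have hlt : ∀ i : Fin (n - p), p + (i : ℕ) < n := fun i => by omega
  let Z₁ : Matrix (Fin p) (Fin n) ℝ := fun i j => Z (Fin.castLE hn i) j
  have h1 := transpose_mul_split_rows hn hlt U Z U₁ Z₁ U₂ Z₂ hU₁ (fun _ _ => rfl) hU₂ hZ₂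
  have h2 := transpose_mul_split_rows hn hlt Z Z Z₁ Z₁ Z₂ Z₂ (fun _ _ => rfl) (fun _ _ => rfl) hZ₂ hZ₂
  rw [hUZ] at h1
  rw [hZZ] at h2
  have hdet : IsUnit (U₁ᵀ).det := by
    rw [Matrix.det_transpose]; exact (Matrix.isUnit_iff_isUnit_det _).1 hU₁inv
  have h3 : (U₁ᵀ)⁻¹ * (U₂ᵀ * Z₂) = -Z₁ := by
    rw [eq_neg_of_add_eq_zero_right h1.symm, Matrix.mul_neg,
      Matrix.nonsing_inv_mul_cancel_left _ _ hdet]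
  have h4 : Z₂ᵀ * (U₂ * U₁⁻¹) = -Z₁ᵀ := by
    have := congrArg Matrix.transpose h3
    simpa [Matrix.transpose_mul, Matrix.transpose_nonsing_inv, Matrix.mul_assoc] using this
  calc Z₂ᵀ * (1 + U₂ * U₁⁻¹ * (U₁ᵀ)⁻¹ * U₂ᵀ) * Z₂
      = Z₂ᵀ * Z₂ + (Z₂ᵀ * (U₂ * U₁⁻¹)) * ((U₁ᵀ)⁻¹ * (U₂ᵀ * Z₂)) := by
        simp only [Matrix.mul_add, Matrix.add_mul, Matrix.mul_one, Matrix.mul_assoc]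
    _ = Z := by
        rw [h3, h4, Matrix.neg_mul, Matrix.mul_neg, neg_neg, add_comm, ← h2]
end

section
/- Let n ≥ p ≥ 1 and let U ∈ M_{n×p}(ℝ) satisfy UᵀU = I_p. Then for every np×np real matrix H and every p×p real matrix Σ: tr( (I_{np} − (1/2) I_p ⊗ (UUᵀ) − (1/2) Λ(U)) · (H − Σ ⊗ I_n) ) = tr(H) − (1/2) tr( (I_p ⊗ (UUᵀ) + Λ(U)) H ) − (n − (p+1)/2) tr(Σ). (Applied with H the Euclidean Hessian of an extension f of a smooth function on St_p^n and Σ the matrix of Lagrange multiplier functions, this yields the explicit formula Δ_{St_p^n} f̃(U) = Δf(U) − (n − (p+1)/2) tr(Uᵀ ∇f(U)) − (1/2) tr((I_p ⊗ (UUᵀ) + Λ(U)) Hess f(U)) for the Laplace–Beltrami operator on the Stiefel manifold.) -/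
/-!
Expanding the product by bilinearity, the terms containing `H` match on both sides. What is left on
the left-hand side is the negative of
`tr(S ⊗ I_n) - (1/2) tr((I_p ⊗ UUᵀ)(S ⊗ I_n)) - (1/2) tr(Λ(U)(S ⊗ I_n))`.
These three traces are `n tr S`, `tr S · tr(UUᵀ) = p tr S` and `tr S`
(`trace_kronecker_gram_mul`, `trace_Lam_mul_kronecker_one`), where the last two use `UᵀU = I_p`.
-/

open Matrix Kronecker

/-- The `np × np` matrix `Λ(U)`, with rows and columns indexed by pairs
`(a, i) ∈ {1,…,p} × {1,…,n}`, whose `(a, b)` block is `u_b u_aᵀ`;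
i.e. `Λ(U)[(a,i),(b,j)] = u_{ib} u_{ja}`. -/
def Lam {n p : ℕ} (U : Matrix (Fin n) (Fin p) ℝ) :
    Matrix (Fin p × Fin n) (Fin p × Fin n) ℝ :=
  Matrix.of fun x y => U x.2 y.1 * U y.2 x.1

theorem trace_kronecker_gram_mul {n p : ℕ} (U : Matrix (Fin n) (Fin p) ℝ) (hU : Uᵀ * U = 1)
    (S : Matrix (Fin p) (Fin p) ℝ) :
    Matrix.trace (((1 : Matrix (Fin p) (Fin p) ℝ) ⊗ₖ (U * Uᵀ)) *
      (S ⊗ₖ (1 : Matrix (Fin n) (Fin n) ℝ))) = (p : ℝ) * Matrix.trace S := by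
  rw [← Matrix.mul_kronecker_mul, Matrix.one_mul, Matrix.mul_one, Matrix.trace_kronecker,
    Matrix.trace_mul_comm, hU, Matrix.trace_one, Fintype.card_fin, mul_comm]

/-- Summing the entries over the index in `Fin n` first turns the trace into
`∑ a b, (UᵀU) b a * S b a`. -/
theorem trace_Lam_mul_kronecker_one {n p : ℕ} (U : Matrix (Fin n) (Fin p) ℝ) (hU : Uᵀ * U = 1)
    (S : Matrix (Fin p) (Fin p) ℝ) :
    Matrix.trace (Lam U * (S ⊗ₖ (1 : Matrix (Fin n) (Fin n) ℝ))) = Matrix.trace S := by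
  have h : ∀ a b, ∑ i, U i b * U i a = (1 : Matrix (Fin p) (Fin p) ℝ) b a := by
    intro a b
    rw [← hU]
    simp [Matrix.mul_apply]
  calc Matrix.trace (Lam U * (S ⊗ₖ (1 : Matrix (Fin n) (Fin n) ℝ)))
      = ∑ a, ∑ i, ∑ b, U i b * U i a * S b a := by
        simp [Matrix.trace, Matrix.mul_apply, Lam, Fintype.sum_prod_type, Matrix.one_apply]
    _ = ∑ a, ∑ b, (∑ i, U i b * U i a) * S b a := by
        refine Finset.sum_congr rfl fun a _ => ?_
        rw [Finset.sum_comm]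
        simp only [Finset.sum_mul]
    _ = Matrix.trace S := by
        simp [h, Matrix.one_apply, Matrix.trace]

/-- **The trace identity behind the Laplace–Beltrami formula on the Stiefel manifold.**
For `n ≥ p ≥ 1`, `U` with `UᵀU = I_p`, every `np × np` matrix `H` and every
`p × p` matrix `Σ`:
`tr((I_{np} − (1/2) I_p ⊗ (UUᵀ) − (1/2) Λ(U)) (H − Σ ⊗ I_n))
  = tr(H) − (1/2) tr((I_p ⊗ (UUᵀ) + Λ(U)) H) − (n − (p+1)/2) tr(Σ)`.
Applied with `H = Hess f(U)` and `Σ = Σ(U)` (Lagrange multiplier matrix), this yields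
`Δ_{St_p^n} f̃(U) = Δf(U) − (n − (p+1)/2) tr(Uᵀ∇f(U))
  − (1/2) tr((I_p ⊗ (UUᵀ) + Λ(U)) Hess f(U))`. -/
theorem stiefel_laplace_beltrami_trace_identity {n p : ℕ} (hp : 1 ≤ p) (hn : p ≤ n)
    (U : Matrix (Fin n) (Fin p) ℝ) (hU : Uᵀ * U = 1) :
    ∀ (H : Matrix (Fin p × Fin n) (Fin p × Fin n) ℝ) (S : Matrix (Fin p) (Fin p) ℝ),
      Matrix.trace
          ((1 - (1 / 2 : ℝ) • ((1 : Matrix (Fin p) (Fin p) ℝ) ⊗ₖ (U * Uᵀ))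
              - (1 / 2 : ℝ) • Lam U) *
            (H - S ⊗ₖ (1 : Matrix (Fin n) (Fin n) ℝ))) =
        Matrix.trace H
          - (1 / 2 : ℝ) *
              Matrix.trace (((1 : Matrix (Fin p) (Fin p) ℝ) ⊗ₖ (U * Uᵀ) + Lam U) * H)
          - ((n : ℝ) - ((p : ℝ) + 1) / 2) * Matrix.trace S := by
  intro H S
  have h1 : Matrix.trace (S ⊗ₖ (1 : Matrix (Fin n) (Fin n) ℝ)) = (n : ℝ) * Matrix.trace S := by
    rw [Matrix.trace_kronecker, Matrix.trace_one, Fintype.card_fin, mul_comm]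
  simp only [Matrix.sub_mul, Matrix.mul_sub, Matrix.add_mul, Matrix.one_mul, Matrix.smul_mul,
    Matrix.trace_sub, Matrix.trace_add, Matrix.trace_smul, smul_eq_mul, h1,
    trace_kronecker_gram_mul U hU S, trace_Lam_mul_kronecker_one U hU S]
  ring
end
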